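/- Let A be a unital ring and c \in A a central element such that A is c-adically complete, i.e. the canonical ring homomorphism A \to \varprojlim_n A/c^n A is bijective, and such that the associated graded ring gr(A) = \bigoplus_{n\ge 0} c^n A/c^{n+1} A is left noetherian. Then for every finite index set I and every left A-submodule B of the free module A^I, B is closed in the c-adic topology of A^I: \bigcap_{n\ge 0} (B + c^n A^I) = B. -/

import Mathlib

open DirectSum

section

variable {A : Type*} [Ring A]

/-- A central element of a ring. -/
structure CentralElement (A : Type*) [Ring A] where
  c : A
  central : ∀ a : A, c * a = a * c

namespace CentralElement

variable (z : CentralElement A)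

theorem commute_pow (a : A) (n : ℕ) : z.c ^ n * a = a * z.c ^ n :=
  (Commute.pow_left (z.central a) n).eq

/-- The additive subgroup `cⁿA` of a ring `A` (`c` central). -/
def cPow (n : ℕ) : AddSubgroup A where
  carrier := {x | ∃ a : A, x = z.c ^ n * a}
  add_mem' := by
    rintro x y ⟨a, rfl⟩ ⟨b, rfl⟩
    exact ⟨a + b, by rw [mul_add]⟩
  zero_mem' := ⟨0, by rw [mul_zero]⟩
  neg_mem' := by
    rintro x ⟨a, rfl⟩
    exact ⟨-a, by rw [mul_neg]⟩

theorem cPow_mul_mem {m n : ℕ} {x y : A} (hx : x ∈ z.cPow m) (hy : y ∈ z.cPow n) :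
    x * y ∈ z.cPow (m + n) := by
  obtain ⟨a, rfl⟩ := hx
  obtain ⟨b, rfl⟩ := hy
  refine ⟨a * b, ?_⟩
  rw [pow_add, mul_assoc, ← mul_assoc a, ← z.commute_pow a n, mul_assoc, mul_assoc]

instance : SetLike.GradedMonoid z.cPow where
  one_mem := ⟨1, by rw [pow_zero, one_mul]⟩
  mul_mem _ _ _ _ := z.cPow_mul_mem

/-- The graded ring `⨁ₙ cⁿA` attached to the `c`-adic filtration of `A`. -/
abbrev CAdicRees := ⨁ n, z.cPow n

theorem mem_succ_of_right {u v : z.CAdicRees}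
    (hv : ∀ n, (v n : A) ∈ z.cPow (n + 1)) (n : ℕ) :
    ((u * v) n : A) ∈ z.cPow (n + 1) := by
  classical
  rw [DirectSum.coe_mul_apply]
  refine AddSubgroup.sum_mem _ ?_
  rintro ⟨i, j⟩ hij
  obtain ⟨-, hsum⟩ := Finset.mem_filter.mp hij
  have h : (u i : A) * (v j : A) ∈ z.cPow (i + (j + 1)) :=
    z.cPow_mul_mem (u i).2 (hv j)
  have hidx : i + (j + 1) = n + 1 := by omega
  rwa [hidx] at h

theorem mem_succ_of_left {u v : z.CAdicRees}
    (hu : ∀ n, (u n : A) ∈ z.cPow (n + 1)) (n : ℕ) :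
    ((u * v) n : A) ∈ z.cPow (n + 1) := by
  classical
  rw [DirectSum.coe_mul_apply]
  refine AddSubgroup.sum_mem _ ?_
  rintro ⟨i, j⟩ hij
  obtain ⟨-, hsum⟩ := Finset.mem_filter.mp hij
  have h : (u i : A) * (v j : A) ∈ z.cPow (i + 1 + j) :=
    z.cPow_mul_mem (hu i) (v j).2
  have hidx : i + 1 + j = n + 1 := by omega
  rwa [hidx] at h

/-- The congruence relation on `⨁ₙ cⁿA` whose quotient is the associated graded ring
`gr(A) = ⨁ₙ cⁿA / cⁿ⁺¹A` of the `c`-adic filtration. -/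
def grCon : RingCon z.CAdicRees where
  r x y := ∀ n, (x n : A) - (y n : A) ∈ z.cPow (n + 1)
  iseqv := by
    refine ⟨fun x n => by simpa using (z.cPow (n + 1)).zero_mem, ?_, ?_⟩
    · intro x y h n
      simpa using (z.cPow (n + 1)).neg_mem (h n)
    · intro x y w h1 h2 n
      simpa using (z.cPow (n + 1)).add_mem (h1 n) (h2 n)
  add' := by
    intro a b a' b' h1 h2 n
    have := (z.cPow (n + 1)).add_mem (h1 n) (h2 n)
    rw [DirectSum.add_apply, DirectSum.add_apply, AddSubgroup.coe_add, AddSubgroup.coe_add]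
    convert this using 1
    abel
  mul' := by
    intro a b a' b' h1 h2 n
    have key : a * a' - b * b' = a * (a' - b') + (a - b) * b' := by noncomm_ring
    have m1 : ((a * (a' - b')) n : A) ∈ z.cPow (n + 1) :=
      z.mem_succ_of_right (fun m => by
        rw [DirectSum.sub_apply, AddSubgroup.coe_sub]; exact h2 m) n
    have m2 : (((a - b) * b') n : A) ∈ z.cPow (n + 1) :=
      z.mem_succ_of_left (fun m => by
        rw [DirectSum.sub_apply, AddSubgroup.coe_sub]; exact h1 m) n
    have : ((a * a' - b * b') n : A) ∈ z.cPow (n + 1) := by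
      rw [key, DirectSum.add_apply, AddSubgroup.coe_add]
      exact (z.cPow (n + 1)).add_mem m1 m2
    rwa [DirectSum.sub_apply, AddSubgroup.coe_sub] at this

/-- The associated graded ring `gr(A) = ⨁ₙ cⁿA / cⁿ⁺¹A` of the `c`-adic filtration of
`A`, realized as the quotient of the graded ring `⨁ₙ cⁿA` by the homogeneous two-sided
ideal `⨁ₙ cⁿ⁺¹A`. -/
abbrev CAdicGraded := z.grCon.Quotient


/-- The congruence relation `a ~ b ↔ a - b ∈ cⁿA`; its quotient ring is `A/cⁿA`. -/
def adicCon (n : ℕ) : RingCon A where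
  r a b := ∃ x : A, a - b = z.c ^ n * x
  iseqv := by
    refine ⟨fun a => ⟨0, by simp⟩, ?_, ?_⟩
    · rintro a b ⟨x, hx⟩
      exact ⟨-x, by rw [mul_neg, ← hx]; abel⟩
    · rintro a b d ⟨x, hx⟩ ⟨y, hy⟩
      exact ⟨x + y, by rw [mul_add, ← hx, ← hy]; abel⟩
  add' := by
    rintro a b a' b' ⟨x, hx⟩ ⟨y, hy⟩
    exact ⟨x + y, by rw [mul_add, ← hx, ← hy]; abel⟩
  mul' := by
    rintro a b a' b' ⟨x, hx⟩ ⟨y, hy⟩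
    refine ⟨a * y + x * b', ?_⟩
    calc a * a' - b * b' = a * (a' - b') + (a - b) * b' := by noncomm_ring
      _ = a * (z.c ^ n * y) + z.c ^ n * x * b' := by rw [hx, hy]
      _ = z.c ^ n * (a * y) + z.c ^ n * (x * b') := by
          rw [← mul_assoc, ← z.commute_pow a n, mul_assoc, mul_assoc]
      _ = z.c ^ n * (a * y + x * b') := by rw [mul_add]

/-- The transition map `A/cⁿ⁺¹A → A/cⁿA` of the inverse system. -/
def adicTransition (n : ℕ) : (z.adicCon (n + 1)).Quotient → (z.adicCon n).Quotient :=
  Quotient.map' id (by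
    rintro a b ⟨x, hx⟩
    exact ⟨z.c * x, by show a - b = _; rw [hx, pow_succ, mul_assoc]⟩)

/-- The inverse limit `lim_n A/cⁿA`, realized as the set of sequences compatible with
the transition maps. -/
def AdicLim : Type _ :=
  { f : ∀ n : ℕ, (z.adicCon n).Quotient // ∀ n : ℕ, z.adicTransition n (f (n + 1)) = f n }

/-- The canonical map `A → lim_n A/cⁿA` (the underlying function of the canonical ring
homomorphism). -/
def toAdicLim (a : A) : z.AdicLim :=
  ⟨fun n => (z.adicCon n).mk' a, fun _ => rfl⟩

section Modules

variable (M : Type*) [AddCommGroup M] [Module A M]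

/-- The submodule `cⁿM` of a left `A`-module `M` (`c` central in `A`). -/
def cPowSMul (n : ℕ) : Submodule A M where
  carrier := {x | ∃ m : M, x = z.c ^ n • m}
  add_mem' := by
    rintro x y ⟨m, rfl⟩ ⟨m', rfl⟩
    exact ⟨m + m', by rw [smul_add]⟩
  zero_mem' := ⟨0, by rw [smul_zero]⟩
  smul_mem' := by
    rintro a x ⟨m, rfl⟩
    exact ⟨a • m, by rw [smul_smul, smul_smul, z.commute_pow a n]⟩

theorem cPowSMul_antitone (n : ℕ) : z.cPowSMul M (n + 1) ≤ z.cPowSMul M n := by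
  rintro x ⟨m, rfl⟩
  exact ⟨z.c • m, by rw [pow_succ, mul_smul]⟩

/-- The transition map `M/cⁿ⁺¹M → M/cⁿM` of the inverse system. -/
def modTransition (n : ℕ) : (M ⧸ z.cPowSMul M (n + 1)) →ₗ[A] M ⧸ z.cPowSMul M n :=
  Submodule.mapQ _ _ LinearMap.id (z.cPowSMul_antitone M n)

/-- The inverse limit `lim_n M/cⁿM`, realized as the set of sequences compatible with
the transition maps. -/
def ModuleAdicLim : Type _ :=
  { f : ∀ n : ℕ, M ⧸ z.cPowSMul M n // ∀ n : ℕ, z.modTransition M n (f (n + 1)) = f n }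

/-- The canonical map `M → lim_n M/cⁿM` (the underlying function of the canonical
`A`-module homomorphism). -/
def toModuleAdicLim (x : M) : z.ModuleAdicLim M :=
  ⟨fun n => Submodule.Quotient.mk x, fun n => by
    simp [modTransition, Submodule.mapQ_apply]⟩

end Modules

end CentralElement

open CentralElement

/-!
Write `T` for multiplication by `c` on a module `M` with `M / cM` noetherian. The submodules
`{m | cⁿm ∈ B + cⁿ⁺¹M}` of leading coefficients of `B` increase with `n` and contain `cM`, so they
stabilize at some `D`. Lifting generators of the `D`-th one to `B` gives a finitely generated
`N ≤ B` such that every element of `B + cⁿ⁺ᴰ⁺¹M` lying in `cⁿ⁺ᴰM` agrees with an element of `cⁿN`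
modulo `cⁿ⁺ᴰ⁺¹M`. Hence an element of the closure of `B` lying in `cᴰM` is approximated, step by
step, by `∑ᵢ cⁱφ(aᵢ)` where `φ : Aᵏ → M` has image `N`. Since `A` is complete, the series `∑ᵢ cⁱaᵢ`
converges, and since `M` is separated, the element lies in `N ≤ B`. Every other element of the closure differs
from one of these by an element of `B`.
-/

section Submodules

variable {M : Type*} [AddCommGroup M] [Module A M]

theorem exists_fg_le_map_eq {P : Type*} [AddCommGroup P] [Module A P] {f : M →ₗ[A] P}
    {B : Submodule A M} {S : Submodule A P} (hS : S.FG) (h : S ≤ B.map f) :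
    ∃ N ≤ B, N.FG ∧ N.map f = S := by
  classical
  obtain ⟨t, rfl⟩ := hS
  obtain ⟨s, hsB, rfl⟩ := Finset.subset_set_image_iff.1 (Submodule.span_le.1 h)
  refine ⟨Submodule.span A s, Submodule.span_le.2 hsB, ⟨s, rfl⟩, ?_⟩
  rw [Submodule.map_span, Finset.coe_image]

theorem exists_forall_ge_eq_of_isNoetherian_quotient {p : Submodule A M} [IsNoetherian A (M ⧸ p)]
    {L : ℕ → Submodule A M} (hL : Monotone L) (hp : ∀ n, p ≤ L n) :
    ∃ D, ∀ n ≥ D, L n = L D := by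
  obtain ⟨D, hD⟩ := monotone_stabilizes_iff_noetherian.2 ‹IsNoetherian A (M ⧸ p)›
    ⟨fun n => (L n).map p.mkQ, fun _ _ hmn => Submodule.map_mono (hL hmn)⟩
  have comap_map (n : ℕ) : ((L n).map p.mkQ).comap p.mkQ = L n := by
    rw [Submodule.comap_map_mkQ, sup_eq_right.2 (hp n)]
  exact ⟨D, fun n hn => by
    rw [← comap_map n, ← comap_map D]
    exact congrArg (Submodule.comap p.mkQ) (hD n hn).symm⟩

theorem exists_seq_sub_sum_mem {C P : ℕ → Submodule A M} (h : ∀ n, C n ≤ P n ⊔ C (n + 1))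
    {x : M} (hx : x ∈ C 0) :
    ∃ p : ℕ → M, (∀ n, p n ∈ P n) ∧ ∀ n, x - ∑ i ∈ Finset.range n, p i ∈ C n := by
  have split (n : ℕ) (y : C n) : ∃ q ∈ P n, (y : M) - q ∈ C (n + 1) := by
    obtain ⟨q, hq, r, hr, hqr⟩ := Submodule.mem_sup.1 (h n y.2)
    exact ⟨q, hq, by rwa [← hqr, add_sub_cancel_left]⟩
  choose q hqP hqC using split
  let y (n : ℕ) : C n :=
    Nat.rec (motive := fun n => C n) ⟨x, hx⟩ (fun n y => ⟨y - q n y, hqC n y⟩) n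
  have remainder (n : ℕ) : x - ∑ i ∈ Finset.range n, q i (y i) = y n := by
    induction n with
    | zero => simp [y]
    | succ n ih => rw [Finset.sum_range_succ, ← sub_sub, ih]
  exact ⟨fun n => q n (y n), fun n => hqP n (y n), fun n => remainder n ▸ (y n).2⟩

end Submodules

section LeadingCoeffs

variable {M : Type*} [AddCommGroup M] [Module A M] (T : Module.End A M) (B : Submodule A M)

/-- The leading coefficients in degree `n` of a submodule `B` for the filtration of `M` by the
images of the powers of `T`: the `m` with `Tⁿ m ∈ B + Tⁿ⁺¹ M`. They are taken in `M` rather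
than in `M / T M`, so that `Tⁿ` can be applied to them. -/
def leadingCoeffs (n : ℕ) : Submodule A M :=
  (B ⊔ (T ^ (n + 1)).range).comap (T ^ n)

theorem map_leadingCoeffs (n : ℕ) :
    (leadingCoeffs T B n).map (T ^ n) = (T ^ n).range ⊓ (B ⊔ (T ^ (n + 1)).range) :=
  Submodule.map_comap_eq _ _

theorem map_pow_range_pow (m n : ℕ) : (T ^ n).range.map (T ^ m) = (T ^ (m + n)).range := by
  rw [pow_add, Module.End.mul_eq_comp, LinearMap.range_comp]

theorem range_le_comap_pow_range_pow_succ (n : ℕ) :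
    T.range ≤ (T ^ (n + 1)).range.comap (T ^ n) := by
  rw [← Submodule.map_le_iff_le_comap, ← map_pow_range_pow, pow_one]

theorem range_le_leadingCoeffs (n : ℕ) : T.range ≤ leadingCoeffs T B n :=
  (range_le_comap_pow_range_pow_succ T n).trans (Submodule.comap_mono le_sup_right)

theorem exists_fg_map_leadingCoeffs_le [IsNoetherian A (M ⧸ T.range)] (n : ℕ) :
    ∃ N ≤ B, N.FG ∧ (leadingCoeffs T B n).map (T ^ n) ≤ N ⊔ (T ^ (n + 1)).range := by
  let R := (T ^ (n + 1)).range
  have fg_image : (((leadingCoeffs T B n).map (T ^ n)).map R.mkQ).FG := by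
    rw [← Submodule.map_comp,
      ← Submodule.mapQ_mkQ _ _ _ (h := range_le_comap_pow_range_pow_succ T n), Submodule.map_comp]
    exact (IsNoetherian.noetherian _).map _
  have image_le : ((leadingCoeffs T B n).map (T ^ n)).map R.mkQ ≤ B.map R.mkQ := by
    rw [Submodule.map_le_iff_le_comap, Submodule.comap_map_mkQ, sup_comm, map_leadingCoeffs]
    exact inf_le_right
  obtain ⟨N, hNB, hN, hmap⟩ := exists_fg_le_map_eq fg_image image_le
  refine ⟨N, hNB, hN, ?_⟩
  rw [sup_comm, ← Submodule.comap_map_mkQ, hmap]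
  exact Submodule.le_comap_map _ _

variable {T B}

theorem map_pow_le_of_map_le (hB : B.map T ≤ B) (n : ℕ) : B.map (T ^ n) ≤ B := by
  induction n with
  | zero => exact (Submodule.map_id B).le
  | succ n ih =>
    rw [pow_succ, Module.End.mul_eq_comp, Submodule.map_comp]
    exact (Submodule.map_mono hB).trans ih

theorem leadingCoeffs_mono (hB : B.map T ≤ B) : Monotone (leadingCoeffs T B) := by
  refine monotone_nat_of_le_succ fun n => Submodule.map_le_iff_le_comap.1 ?_
  calc (leadingCoeffs T B n).map (T ^ (n + 1))
      = ((leadingCoeffs T B n).map (T ^ n)).map T := by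
        rw [pow_succ', Module.End.mul_eq_comp, Submodule.map_comp]
    _ ≤ (B ⊔ (T ^ (n + 1)).range).map T :=
        Submodule.map_mono ((map_leadingCoeffs T B n).trans_le inf_le_right)
    _ = B.map T ⊔ (T ^ (n + 1 + 1)).range := by
        rw [Submodule.map_sup, pow_succ' T (n + 1), Module.End.mul_eq_comp, LinearMap.range_comp]
    _ ≤ B ⊔ (T ^ (n + 1 + 1)).range := sup_le_sup_right hB _

/-- A form of the Artin–Rees lemma. -/
theorem exists_fg_range_pow_inf_le [IsNoetherian A (M ⧸ T.range)] (hB : B.map T ≤ B) :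
    ∃ D, ∃ N ≤ B, N.FG ∧ ∀ n, (T ^ (n + D)).range ⊓ (B ⊔ (T ^ (n + D + 1)).range) ≤
      N.map (T ^ n) ⊔ (T ^ (n + D + 1)).range := by
  obtain ⟨D, hD⟩ := exists_forall_ge_eq_of_isNoetherian_quotient (leadingCoeffs_mono hB)
    (range_le_leadingCoeffs T B)
  obtain ⟨N, hNB, hN, hle⟩ := exists_fg_map_leadingCoeffs_le T B D
  refine ⟨D, N, hNB, hN, fun n => ?_⟩
  calc (T ^ (n + D)).range ⊓ (B ⊔ (T ^ (n + D + 1)).range)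
      = ((leadingCoeffs T B D).map (T ^ D)).map (T ^ n) := by
        rw [← map_leadingCoeffs, hD (n + D) (Nat.le_add_left D n), pow_add,
          Module.End.mul_eq_comp, Submodule.map_comp]
    _ ≤ (N ⊔ (T ^ (D + 1)).range).map (T ^ n) := Submodule.map_mono hle
    _ = N.map (T ^ n) ⊔ (T ^ (n + D + 1)).range := by
        rw [Submodule.map_sup, map_pow_range_pow, add_assoc]

end LeadingCoeffs

namespace CentralElement

variable (z : CentralElement A)

section Filtration

variable (M : Type*) [AddCommGroup M] [Module A M]

/-- Multiplication by the central element `c` as an `A`-linear endomorphism of `M`. -/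
def smulEnd : Module.End A M :=
  Module.End.smulLeft z.c (Semigroup.mem_center_iff.2 fun a => (z.central a).symm)

variable {M}

theorem smulEnd_pow_apply (n : ℕ) (m : M) : (z.smulEnd M ^ n) m = z.c ^ n • m := by
  rw [Module.End.pow_apply]
  exact smul_iterate_apply z.c n m

variable (M)

theorem range_smulEnd_pow (n : ℕ) : (z.smulEnd M ^ n).range = z.cPowSMul M n := by
  ext x
  simp only [LinearMap.mem_range, smulEnd_pow_apply]
  exact exists_congr fun _ => eq_comm

theorem antitone_cPowSMul : Antitone (z.cPowSMul M) :=
  antitone_nat_of_succ_le (z.cPowSMul_antitone M)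

end Filtration

section Product

variable {ι : Type*}

theorem mem_cPowSMul_pi {M : ι → Type*} [∀ i, AddCommGroup (M i)] [∀ i, Module A (M i)] {n : ℕ}
    {x : ∀ i, M i} : x ∈ z.cPowSMul (∀ i, M i) n ↔ ∀ i, x i ∈ z.cPowSMul (M i) n := by
  refine ⟨?_, fun h => ?_⟩
  · rintro ⟨m, rfl⟩ i
    exact ⟨m i, rfl⟩
  · choose m hm using h
    exact ⟨m, funext hm⟩

theorem iInf_cPowSMul_pi_eq_bot {M : ι → Type*} [∀ i, AddCommGroup (M i)] [∀ i, Module A (M i)]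
    (h : ∀ i, ⨅ n, z.cPowSMul (M i) n = ⊥) : ⨅ n, z.cPowSMul (∀ i, M i) n = ⊥ := by
  refine (Submodule.eq_bot_iff _).2 fun x hx => funext fun i => ?_
  refine (Submodule.mem_bot A).1 (h i ▸ (Submodule.mem_iInf _).2 fun n => ?_)
  exact z.mem_cPowSMul_pi.1 ((Submodule.mem_iInf _).1 hx n) i

end Product

section Completeness

theorem mk'_adicCon_eq_iff {n : ℕ} {a b : A} :
    (z.adicCon n).mk' a = (z.adicCon n).mk' b ↔ a - b ∈ z.cPowSMul A n :=
  RingCon.eq (z.adicCon n)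

theorem iInf_cPowSMul_self_eq_bot (h : Function.Injective z.toAdicLim) :
    ⨅ n, z.cPowSMul A n = ⊥ := by
  refine (Submodule.eq_bot_iff _).2 fun a ha => h (Subtype.ext (funext fun n => ?_))
  refine z.mk'_adicCon_eq_iff.2 ?_
  rw [sub_zero]
  exact (Submodule.mem_iInf _).1 ha n

theorem exists_sub_sum_pow_mul_mem (h : Function.Surjective z.toAdicLim) (a : ℕ → A) :
    ∃ l, ∀ n, l - ∑ i ∈ Finset.range n, z.c ^ i * a i ∈ z.cPowSMul A n := by
  let s (n : ℕ) : A := ∑ i ∈ Finset.range n, z.c ^ i * a i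
  have compatible (n : ℕ) : (z.adicCon n).mk' (s (n + 1)) = (z.adicCon n).mk' (s n) :=
    z.mk'_adicCon_eq_iff.2 ⟨a n, by simp [s, Finset.sum_range_succ]⟩
  obtain ⟨l, hl⟩ := h ⟨fun n => (z.adicCon n).mk' (s n), compatible⟩
  exact ⟨l, fun n => z.mk'_adicCon_eq_iff.1 (congrFun (congrArg Subtype.val hl) n)⟩

theorem exists_sub_sum_pow_smul_mem_pi (h : Function.Surjective z.toAdicLim) {ι : Type*}
    (a : ℕ → ι → A) :
    ∃ l, ∀ n, l - ∑ i ∈ Finset.range n, z.c ^ i • a i ∈ z.cPowSMul (ι → A) n := by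
  choose l hl using fun j => z.exists_sub_sum_pow_mul_mem h fun i => a i j
  exact ⟨l, fun n => z.mem_cPowSMul_pi.2 fun j => by simpa using hl j n⟩

variable {M : Type*} [AddCommGroup M] [Module A M]

theorem map_mem_cPowSMul {F : Type*} [AddCommGroup F] [Module A F] (φ : F →ₗ[A] M) {n : ℕ} {x : F}
    (hx : x ∈ z.cPowSMul F n) : φ x ∈ z.cPowSMul M n := by
  obtain ⟨y, rfl⟩ := hx
  exact ⟨φ y, map_smul φ _ y⟩

theorem le_of_fg_of_le_map_pow_sup (hA : Function.Surjective z.toAdicLim)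
    (hM : ⨅ n, z.cPowSMul M n = ⊥) {N : Submodule A M} (hN : N.FG) {C : ℕ → Submodule A M}
    (hC : ∀ n, C n ≤ z.cPowSMul M n) (hstep : ∀ n, C n ≤ N.map (z.smulEnd M ^ n) ⊔ C (n + 1)) :
    C 0 ≤ N := by
  obtain ⟨k, φ, rfl⟩ := (Submodule.fg_iff_exists_fin_linearMap A M).1 hN
  intro x hx
  obtain ⟨p, hp, hxp⟩ := exists_seq_sub_sum_mem hstep hx
  have coeff (n : ℕ) : ∃ a, φ (z.c ^ n • a) = p n := by
    obtain ⟨_, ⟨a, rfl⟩, ha⟩ := hp n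
    exact ⟨a, by rw [map_smul, ← smulEnd_pow_apply, ha]⟩
  choose a ha using coeff
  obtain ⟨l, hl⟩ := z.exists_sub_sum_pow_smul_mem_pi hA a
  have sub_mem_pow (n : ℕ) : x - φ l ∈ z.cPowSMul M n := by
    have hφ := z.map_mem_cPowSMul φ (hl n)
    simp only [map_sub, map_sum, ha] at hφ
    simpa using sub_mem (hC n (hxp n)) hφ
  have sub_mem_bot : x - φ l ∈ (⊥ : Submodule A M) := hM ▸ (Submodule.mem_iInf _).2 sub_mem_pow
  exact ⟨l, (sub_eq_zero.1 ((Submodule.mem_bot A).1 sub_mem_bot)).symm⟩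

end Completeness

section Noetherian

/-- The projection of `⨁ₙ cⁿA` onto its component of degree zero, as a ring homomorphism to `A`. -/
def reesProjZero : z.CAdicRees →+* A where
  toFun u := u 0
  map_zero' := rfl
  map_add' _ _ := rfl
  map_one' := rfl
  map_mul' u v := by simp [DirectSum.coe_mul_apply_eq_sum_antidiagonal]

/-- The projection of `gr(A)` onto its component `A / cA` of degree zero. -/
def grProjZero : z.CAdicGraded →+* (z.adicCon 1).Quotient :=
  z.grCon.lift ((z.adicCon 1).mk'.comp z.reesProjZero) fun _ _ h =>
    (RingCon.eq (z.adicCon 1)).2 (h 0)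

theorem grProjZero_surjective : Function.Surjective z.grProjZero := by
  intro r
  obtain ⟨a, rfl⟩ := (z.adicCon 1).mk'_surjective r
  refine ⟨z.grCon.mk' (DirectSum.of (fun n => z.cPow n) 0 ⟨a, a, by simp⟩), ?_⟩
  change (z.adicCon 1).mk' (DirectSum.of (fun n => z.cPow n) 0 ⟨a, a, by simp⟩ 0 : A) = _
  rw [DirectSum.of_eq_same]

theorem isNoetherianRing_quotient_adicCon_one [IsNoetherianRing z.CAdicGraded] :
    IsNoetherianRing (z.adicCon 1).Quotient :=
  isNoetherianRing_of_surjective _ _ z.grProjZero z.grProjZero_surjective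

/-- Coordinatewise reduction modulo `cⁿ`, semilinear along `A → A / cⁿA`. -/
def piReduction (ι : Type*) (n : ℕ) :
    (ι → A) →ₛₗ[(z.adicCon n).mk'] (ι → (z.adicCon n).Quotient) where
  toFun x i := (z.adicCon n).mk' (x i)
  map_add' _ _ := funext fun _ => map_add _ _ _
  map_smul' _ _ := funext fun _ => map_mul _ _ _

theorem ker_piReduction (ι : Type*) (n : ℕ) :
    (z.piReduction ι n).ker = z.cPowSMul (ι → A) n := by
  ext x
  rw [LinearMap.mem_ker, mem_cPowSMul_pi, funext_iff]
  refine forall_congr' fun i => ?_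
  change (z.adicCon n).mk' (x i) = 0 ↔ _
  rw [← map_zero (z.adicCon n).mk', mk'_adicCon_eq_iff, sub_zero]

theorem isNoetherian_pi_quotient_cPowSMul (ι : Type*) [Finite ι] (n : ℕ)
    [IsNoetherianRing (z.adicCon n).Quotient] :
    IsNoetherian A ((ι → A) ⧸ z.cPowSMul (ι → A) n) := by
  have : RingHomSurjective (z.adicCon n).mk' := ⟨(z.adicCon n).mk'_surjective⟩
  let e := (z.cPowSMul (ι → A) n).liftQ (z.piReduction ι n) (z.ker_piReduction ι n).ge
  have injective : Function.Injective e :=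
    LinearMap.ker_eq_bot.1 (Submodule.ker_liftQ_eq_bot _ _ _ (z.ker_piReduction ι n).le)
  have surjective : Function.Surjective e := fun y => by
    choose x hx using fun i => (z.adicCon n).mk'_surjective (y i)
    exact ⟨Submodule.Quotient.mk x, funext hx⟩
  exact (LinearMap.isNoetherian_iff_of_bijective e ⟨injective, surjective⟩).2 inferInstance

end Noetherian

end CentralElement

theorem submodule_closed_in_adic_topology_general
    (z : CentralElement A) (hA : Function.Surjective z.toAdicLim)
    {M : Type*} [AddCommGroup M] [Module A M] (hM : ⨅ n, z.cPowSMul M n = ⊥)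
    (hnoeth : IsNoetherian A (M ⧸ z.cPowSMul M 1)) (B : Submodule A M) :
    ⨅ n, B ⊔ z.cPowSMul M n = B := by
  set closure := ⨅ n, B ⊔ z.cPowSMul M n
  have hB : B ≤ closure := le_iInf fun _ => le_sup_left
  have hclosure (n : ℕ) : closure ≤ B ⊔ z.cPowSMul M n := iInf_le _ n
  have smul_le : B.map (z.smulEnd M) ≤ B :=
    Submodule.map_le_iff_le_comap.2 fun _ hb => B.smul_mem z.c hb
  rw [← range_smulEnd_pow, pow_one] at hnoeth
  obtain ⟨D, N, hNB, hN, hlead⟩ := exists_fg_range_pow_inf_le smul_le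
  simp only [range_smulEnd_pow] at hlead
  have step (n : ℕ) : z.cPowSMul M (n + D) ⊓ closure ≤
      N.map (z.smulEnd M ^ n) ⊔ z.cPowSMul M (n + 1 + D) ⊓ closure := by
    have hmap : N.map (z.smulEnd M ^ n) ≤ closure :=
      ((Submodule.map_mono hNB).trans (map_pow_le_of_map_le smul_le n)).trans hB
    rw [← sup_inf_assoc_of_le _ hmap, add_right_comm]
    exact le_inf ((inf_le_inf_left _ (hclosure _)).trans (hlead n)) inf_le_right
  have inf_closure_le : z.cPowSMul M D ⊓ closure ≤ N := by
    simpa only [zero_add] using z.le_of_fg_of_le_map_pow_sup hA hM hN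
      (fun n => inf_le_left.trans (z.antitone_cPowSMul M (Nat.le_add_right n D))) step
  refine le_antisymm ?_ hB
  calc closure ≤ (B ⊔ z.cPowSMul M D) ⊓ closure := le_inf (hclosure _) le_rfl
    _ = B ⊔ z.cPowSMul M D ⊓ closure := sup_inf_assoc_of_le _ hB
    _ ≤ B := sup_le le_rfl (inf_closure_le.trans hNB)

/-- let `A` be a unital ring and `c ∈ A` a central element such that `A` is
`c`-adically complete (the canonical ring homomorphism `A → lim_n A/cⁿA` is bijective)
and such that the associated graded ring `gr(A) = ⨁ₙ cⁿA/cⁿ⁺¹A` is left noetherian.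
Then for every finite index set `ι` and every left `A`-submodule `B` of the free module
`A^ι`, `B` is closed in the `c`-adic topology of `A^ι`: `⋂ₙ (B + cⁿ·A^ι) = B`. -/
theorem submodule_closed_in_adic_topology
    (z : CentralElement A)
    (hcomplete : Function.Bijective z.toAdicLim)
    (hnoeth : IsNoetherianRing z.CAdicGraded)
    (ι : Type) [Fintype ι] (B : Submodule A (ι → A)) :
    (⨅ n : ℕ, B ⊔ z.cPowSMul (ι → A) n) = B := by
  have := z.isNoetherianRing_quotient_adicCon_one
  exact submodule_closed_in_adic_topology_general z hcomplete.surjective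
    (z.iInf_cPowSMul_pi_eq_bot fun _ => z.iInf_cPowSMul_self_eq_bot hcomplete.injective)
    (z.isNoetherian_pi_quotient_cPowSMul ι 1) B

end
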